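/- arXiv:1803.06491 — 2 statements merged into one kernel-verified Lean document; each statement's English description precedes it below -/
import Mathlib

section
/- The rotation matrix Z^ρ(u) = Σ_{1≤i<N} E_{i,i+1} + u E_{N,1} is a symmetry of the Bazhanov–Jimbo R-matrix: for all u, v ∈ ℂ^× with u/v ≠ q^{±2}, the commutator [R(u/v), Z^ρ(u)⊗Z^ρ(v)] vanishes. -/
/-!
In the standard basis, `Z^ρ(u)` is a weighted cyclic shift: with `σ = finRotate N` its only nonzero
entry in row `i` is in column `σ i`, and it equals `u` in the last row and `1` otherwise.
The normalisations satisfy `f_{q⁻¹}(x⁻¹) = -x f_q(x)`, so `R(x) = f_q(x) (R_q - x P R_{q⁻¹} P)`, and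
`R(x)` has nonzero entries only at `((a,b),(a,b))` and `((a,b),(b,a))`. Up to `f_q(x)` these are
`q - q⁻¹ x` for `a = b`; `1 - x` on the diagonal for `a ≠ b`; and `q - q⁻¹` or `x (q - q⁻¹)` off the
diagonal, according to whether `a < b` or `b < a`.

The commutator therefore vanishes as soon as the entries of `R(u/v)` are covariant under `σ`, up to
the weights (`RBJ_covariant`). The rotation preserves the order of `a ≠ b` unless one of them is the
last index; in that case the order flips, and the resulting factor `x = u / v` is exactly the ratio
of the weights `u` and `v`.
-/

open Matrix
open scoped Kronecker

noncomputable section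

/-- 1-based matrix unit `E_{a b}` in the `N × N` complex matrices. -/
def Em (N : ℕ) (a b : ℕ) : Matrix (Fin N) (Fin N) ℂ :=
  Matrix.of fun i j => if (i : ℕ) + 1 = a ∧ (j : ℕ) + 1 = b then 1 else 0

/-- The flip (permutation) operator `P = Σ_{i,j} E_{ij} ⊗ E_{ji}`. -/
def Pmat (N : ℕ) : Matrix (Fin N × Fin N) (Fin N × Fin N) ℂ :=
  ∑ i ∈ Finset.Icc 1 N, ∑ j ∈ Finset.Icc 1 N, Em N i j ⊗ₖ Em N j i

/-- The constant R-matrix `R_q`. -/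
def Rconst (N : ℕ) (q : ℂ) : Matrix (Fin N × Fin N) (Fin N × Fin N) ℂ :=
  (∑ i ∈ Finset.Icc 1 N, ∑ j ∈ Finset.Icc 1 N,
      (if i = j then q else 1) • (Em N i i ⊗ₖ Em N j j))
    + ∑ i ∈ Finset.Icc 1 N, ∑ j ∈ Finset.Icc 1 N,
        (if i < j then q - q⁻¹ else 0) • (Em N i j ⊗ₖ Em N j i)

/-- `f_q(u) = 1/(q - q⁻¹ u)`. -/
def fBJ (q u : ℂ) : ℂ := (q - q⁻¹ * u)⁻¹

/-- The Bazhanov–Jimbo R-matrix `R(u) = f_q(u) R_q + f_{q⁻¹}(u⁻¹) P R_{q⁻¹} P`. -/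
def RBJ (N : ℕ) (q u : ℂ) : Matrix (Fin N × Fin N) (Fin N × Fin N) ℂ :=
  fBJ q u • Rconst N q + fBJ q⁻¹ u⁻¹ • (Pmat N * Rconst N q⁻¹ * Pmat N)

/-- `X1 = X ⊗ I`. -/
def M1 (N : ℕ) (X : Matrix (Fin N) (Fin N) ℂ) : Matrix (Fin N × Fin N) (Fin N × Fin N) ℂ :=
  X ⊗ₖ (1 : Matrix (Fin N) (Fin N) ℂ)

/-- `X2 = I ⊗ X`. -/
def M2 (N : ℕ) (X : Matrix (Fin N) (Fin N) ℂ) : Matrix (Fin N × Fin N) (Fin N × Fin N) ℂ :=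
  (1 : Matrix (Fin N) (Fin N) ℂ) ⊗ₖ X

/-- `R21(u) = P R(u) P`. -/
def R21 (N : ℕ) (q u : ℂ) : Matrix (Fin N × Fin N) (Fin N × Fin N) ℂ :=
  Pmat N * RBJ N q u * Pmat N

/-- Transposition in the first tensor factor. -/
def t1 (N : ℕ) (X : Matrix (Fin N × Fin N) (Fin N × Fin N) ℂ) :
    Matrix (Fin N × Fin N) (Fin N × Fin N) ℂ :=
  Matrix.of fun p r => X (r.1, p.2) (p.1, r.2)

/-- The charge conjugation matrix `C = Σ_i (-q)^i E_{ī i}` where `ī = N+1-i`. -/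
def Cmat (N : ℕ) (q : ℂ) : Matrix (Fin N) (Fin N) ℂ :=
  ∑ i ∈ Finset.Icc 1 N, (-q) ^ i • Em N (N + 1 - i) i

/-- The C-conjugated R-matrix `R^∨(u) = C2⁻¹ R^{t1}(q̃² u⁻¹) C2` with `q̃ = s^N`. -/
def Rvee (N : ℕ) (q s u : ℂ) : Matrix (Fin N × Fin N) (Fin N × Fin N) ℂ :=
  (M2 N (Cmat N q))⁻¹ * t1 N (RBJ N q ((s ^ N) ^ 2 * u⁻¹)) * M2 N (Cmat N q)

/-- `R^∨21(u) = P R^∨(u) P`. -/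
def Rvee21 (N : ℕ) (q s u : ℂ) : Matrix (Fin N × Fin N) (Fin N × Fin N) ℂ :=
  Pmat N * Rvee N q s u * Pmat N

/-- The untwisted reflection equation at spectral parameters `(u, v)`. -/
def REeq (N : ℕ) (q : ℂ) (K : ℂ → Matrix (Fin N) (Fin N) ℂ) (u v : ℂ) : Prop :=
  R21 N q (u / v) * M1 N (K u) * RBJ N q (u * v) * M2 N (K v)
    = M2 N (K v) * R21 N q (u * v) * M1 N (K u) * RBJ N q (u / v)

/-- `K` satisfies the untwisted reflection equation (RE) for all `u, v`
for which all factors are defined. -/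
def IsRESol (N : ℕ) (q : ℂ) (K : ℂ → Matrix (Fin N) (Fin N) ℂ) : Prop :=
  ∀ u v : ℂ, u ≠ 0 → v ≠ 0 → u / v ≠ q ^ 2 → u / v ≠ q⁻¹ ^ 2 →
    u * v ≠ q ^ 2 → u * v ≠ q⁻¹ ^ 2 → REeq N q K u v

/-- The cross-conjugated twisted reflection equation at `(u, v)`. -/
def CtREeq (N : ℕ) (q s : ℂ) (K : ℂ → Matrix (Fin N) (Fin N) ℂ) (u v : ℂ) : Prop :=
  R21 N q (u / v) * M1 N (K u) * Rvee N q s (u * v) * M2 N (K v)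
    = M2 N (K v) * Rvee21 N q s (u * v) * M1 N (K u) * RBJ N q (u / v)

/-- `K` satisfies the cross-conjugated twisted reflection equation (CtRE) for all
`u, v` for which all factors are defined. -/
def IsCtRESol (N : ℕ) (q s : ℂ) (K : ℂ → Matrix (Fin N) (Fin N) ℂ) : Prop :=
  ∀ u v : ℂ, u ≠ 0 → v ≠ 0 → u / v ≠ q ^ 2 → u / v ≠ q⁻¹ ^ 2 →
    (s ^ N) ^ 2 * (u * v)⁻¹ ≠ q ^ 2 → (s ^ N) ^ 2 * (u * v)⁻¹ ≠ q⁻¹ ^ 2 →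
    CtREeq N q s K u v

/-- Transposition across the antidiagonal: `(M^w)_{ij} = M_{N+1-j, N+1-i}`. -/
def wT (N : ℕ) (M : Matrix (Fin N) (Fin N) ℂ) : Matrix (Fin N) (Fin N) ℂ :=
  Matrix.of fun i j => M (Fin.rev j) (Fin.rev i)

/-- The rotation matrix `Z^ρ(u) = Σ_{1 ≤ i < N} E_{i,i+1} + u E_{N,1}`. -/
def Zrho (N : ℕ) (u : ℂ) : Matrix (Fin N) (Fin N) ℂ :=
  (∑ i ∈ Finset.Icc 1 (N - 1), Em N i (i + 1)) + u • Em N N 1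

lemma Em_apply (N a b : ℕ) (i j : Fin N) :
    Em N a b i j = if (i : ℕ) + 1 = a ∧ (j : ℕ) + 1 = b then 1 else 0 := rfl

/-- A double sum over the 1-based index range whose terms are supported at the position of
the pair `(a, b)` collapses to a single term. -/
lemma sum_Icc_collapse {N : ℕ} (a b : Fin N) (F : ℕ → ℕ → ℂ)
    (hF : ∀ i j, ¬ ((a : ℕ) + 1 = i ∧ (b : ℕ) + 1 = j) → F i j = 0) :
    ∑ i ∈ Finset.Icc 1 N, ∑ j ∈ Finset.Icc 1 N, F i j = F (a + 1) (b + 1) := by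
  have ha : (a : ℕ) + 1 ∈ Finset.Icc 1 N := by
    simp only [Finset.mem_Icc]; omega
  have hb : (b : ℕ) + 1 ∈ Finset.Icc 1 N := by
    simp only [Finset.mem_Icc]; omega
  rw [Finset.sum_eq_single_of_mem _ ha, Finset.sum_eq_single_of_mem _ hb]
  · intro j _ hj
    exact hF _ _ fun h => hj h.2.symm
  · intro i _ hi
    exact Finset.sum_eq_zero fun j _ => hF _ _ fun h => hi h.1.symm

lemma sum_diag_apply {N : ℕ} (g : ℕ → ℕ → ℂ) (a b c d : Fin N) :
    (∑ i ∈ Finset.Icc 1 N, ∑ j ∈ Finset.Icc 1 N, g i j • (Em N i i ⊗ₖ Em N j j)) (a, b) (c, d)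
      = if a = c ∧ b = d then g (a + 1) (b + 1) else 0 := by
  simp only [Matrix.sum_apply, Matrix.smul_apply, smul_eq_mul, Matrix.kroneckerMap_apply, Em_apply]
  rw [sum_Icc_collapse a b]
  · simp only [Fin.ext_iff]
    grind
  · grind

lemma sum_flip_apply {N : ℕ} (g : ℕ → ℕ → ℂ) (a b c d : Fin N) :
    (∑ i ∈ Finset.Icc 1 N, ∑ j ∈ Finset.Icc 1 N, g i j • (Em N i j ⊗ₖ Em N j i)) (a, b) (c, d)
      = if a = d ∧ b = c then g (a + 1) (b + 1) else 0 := by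
  simp only [Matrix.sum_apply, Matrix.smul_apply, smul_eq_mul, Matrix.kroneckerMap_apply, Em_apply]
  rw [sum_Icc_collapse a b]
  · simp only [Fin.ext_iff]
    grind
  · grind

lemma Pmat_apply {N : ℕ} (a b c d : Fin N) :
    Pmat N (a, b) (c, d) = if a = d ∧ b = c then 1 else 0 := by
  have h := sum_flip_apply (fun _ _ => 1) a b c d
  simp only [one_smul] at h
  exact h

lemma Rconst_apply {N : ℕ} (q : ℂ) (a b c d : Fin N) :
    Rconst N q (a, b) (c, d) = (if a = c ∧ b = d then (if a = b then q else 1) else 0)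
      + (if a = d ∧ b = c then (if a < b then q - q⁻¹ else 0) else 0) := by
  rw [Rconst, Matrix.add_apply, sum_diag_apply (fun i j => if i = j then q else 1),
    sum_flip_apply (fun i j => if i < j then q - q⁻¹ else 0)]
  simp only [Fin.ext_iff, Fin.lt_def, Nat.add_right_cancel_iff, Nat.add_lt_add_iff_right]

/-- Conjugation by the flip exchanges the two tensor factors. -/
lemma Pmat_conj_apply {N : ℕ} (M : Matrix (Fin N × Fin N) (Fin N × Fin N) ℂ) (a b c d : Fin N) :
    (Pmat N * M * Pmat N) (a, b) (c, d) = M (b, a) (d, c) := by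
  rw [Matrix.mul_apply, Finset.sum_eq_single_of_mem (d, c) (Finset.mem_univ _),
    Matrix.mul_apply, Finset.sum_eq_single_of_mem (b, a) (Finset.mem_univ _)]
  · simp [Pmat_apply]
  · rintro ⟨i, j⟩ _ h
    rw [Pmat_apply, if_neg, zero_mul]
    grind
  · rintro ⟨i, j⟩ _ h
    rw [Pmat_apply, if_neg, mul_zero]
    grind

/-- The two normalisation factors of the R-matrix are proportional; at a common pole both sides
vanish, as inverses of zero. -/
lemma fBJ_inv {q x : ℂ} (hx : x ≠ 0) : fBJ q⁻¹ x⁻¹ = -x * fBJ q x := by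
  have h : q⁻¹ - q⁻¹⁻¹ * x⁻¹ = -x⁻¹ * (q - q⁻¹ * x) := by
    rw [inv_inv]
    field_simp
    ring
  rw [fBJ, fBJ, h, mul_inv, inv_neg, inv_inv]

lemma RBJ_apply {N : ℕ} {q x : ℂ} (hx : x ≠ 0) (a b c d : Fin N) :
    RBJ N q x (a, b) (c, d) = fBJ q x *
      ((if a = c ∧ b = d then (if a = b then q - q⁻¹ * x else 1 - x) else 0)
        + (if a = d ∧ b = c then
            (if a < b then q - q⁻¹ else if b < a then x * (q - q⁻¹) else 0) else 0)) := by
  rw [RBJ, Matrix.add_apply, Matrix.smul_apply, Matrix.smul_apply, Pmat_conj_apply,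
    Rconst_apply, Rconst_apply, fBJ_inv hx, inv_inv, smul_eq_mul, smul_eq_mul]
  rcases lt_trichotomy a b with h | h | h
  · have := h.ne
    have := h.not_gt
    grind
  · subst h
    grind
  · have := h.ne
    have := h.not_gt
    grind

/-- The weight of row `i` in `Z^ρ(u)`: `u` in the last row and `1` in the others. -/
def rotWeight {n : ℕ} (u : ℂ) (i : Fin (n + 1)) : ℂ := if (i : ℕ) = n then u else 1

lemma finRotate_val {n : ℕ} (i : Fin (n + 1)) :
    (finRotate (n + 1) i : ℕ) = if (i : ℕ) = n then 0 else (i : ℕ) + 1 := by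
  rw [coe_finRotate]
  simp only [Fin.ext_iff, Fin.val_last]

/-- `Z^ρ(u)` is a weighted permutation matrix of the cyclic rotation. -/
lemma Zrho_apply {n : ℕ} (u : ℂ) (i j : Fin (n + 1)) :
    Zrho (n + 1) u i j = if finRotate (n + 1) i = j then rotWeight u i else 0 := by
  rw [Zrho, Matrix.add_apply, Matrix.sum_apply, Matrix.smul_apply, smul_eq_mul]
  simp only [Em_apply, Nat.add_sub_cancel, Fin.ext_iff, finRotate_val, rotWeight]
  have hi := i.isLt
  by_cases h : (i : ℕ) = n
  · rw [Finset.sum_eq_zero]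
    · simp only [h]
      grind
    · intro k hk
      rw [Finset.mem_Icc] at hk
      rw [if_neg]
      omega
  · rw [Finset.sum_eq_single_of_mem ((i : ℕ) + 1) (by rw [Finset.mem_Icc]; omega)]
    · grind
    · intro k _ hk
      rw [if_neg]
      omega

/-- Rotating all indices changes the entries of `R(u/v)` by the ratio of the row weights of
`Z^ρ(u) ⊗ Z^ρ(v)`. -/
lemma RBJ_covariant {n : ℕ} {q u v : ℂ} (hu : u ≠ 0) (hv : v ≠ 0) (a b c d : Fin (n + 1)) :
    RBJ (n + 1) q (u / v) (a, b) (c, d) * (rotWeight u c * rotWeight v d)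
      = rotWeight u a * rotWeight v b * RBJ (n + 1) q (u / v)
          (finRotate (n + 1) a, finRotate (n + 1) b)
          (finRotate (n + 1) c, finRotate (n + 1) d) := by
  have hx : u / v ≠ 0 := div_ne_zero hu hv
  obtain ⟨x, hxd⟩ : ∃ x, x = u / v := ⟨_, rfl⟩
  have hux : u = x * v := by rw [hxd, div_mul_cancel₀ _ hv]
  rw [← hxd] at hx ⊢
  rw [RBJ_apply hx, RBJ_apply hx]
  simp only [EmbeddingLike.apply_eq_iff_eq]
  by_cases hd : a = c ∧ b = d
  · obtain ⟨rfl, rfl⟩ := hd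
    by_cases hab : a = b
    · subst hab
      simp only [lt_irrefl]
      ring
    · simp only [hab, false_and, if_false]
      ring
  by_cases hf : a = d ∧ b = c
  · obtain ⟨rfl, rfl⟩ := hf
    have hab : (a : ℕ) ≠ b := fun h => hd ⟨Fin.ext h, Fin.ext h.symm⟩
    have ha := a.isLt
    have hb := b.isLt
    simp only [hd, if_false, and_self, if_true, Fin.lt_def, finRotate_val, rotWeight]
    -- The order of `a` and `b` flips exactly when one of them is the last index.
    by_cases h1 : (a : ℕ) = n
    · have h2 : (b : ℕ) ≠ n := by omega
      simp only [h1, h2, if_true, if_false]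
      rw [if_neg (by omega), if_pos (by omega), if_pos (by omega), hux]
      ring
    · by_cases h2 : (b : ℕ) = n
      · simp only [h1, h2, if_true, if_false]
        rw [if_pos (by omega), if_neg (by omega), if_pos (by omega), hux]
        ring
      · simp only [h1, h2, if_false, Nat.add_lt_add_iff_right]
        ring
  · simp only [hd, hf, if_false, add_zero, mul_zero, zero_mul]

/-- `Z^ρ` is a symmetry of the Bazhanov–Jimbo R-matrix:
`[R(u/v), Z^ρ(u) ⊗ Z^ρ(v)] = 0`. -/
theorem statement2 (N : ℕ) (hN : 2 ≤ N) (q : ℂ) (hq : q ≠ 0)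
    (u v : ℂ) (hu : u ≠ 0) (hv : v ≠ 0)
    (h1 : u / v ≠ q ^ 2) (h2 : u / v ≠ q⁻¹ ^ 2) :
    RBJ N q (u / v) * (Zrho N u ⊗ₖ Zrho N v)
      = (Zrho N u ⊗ₖ Zrho N v) * RBJ N q (u / v) := by


  obtain ⟨n, rfl⟩ : ∃ n, N = n + 1 := ⟨N - 1, by omega⟩
  ext ⟨a, b⟩ ⟨c', d'⟩
  -- Every column index is the rotation of a unique one.
  obtain ⟨c, rfl⟩ := (finRotate (n + 1)).surjective c'
  obtain ⟨d, rfl⟩ := (finRotate (n + 1)).surjective d'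
  rw [Matrix.mul_apply, Finset.sum_eq_single_of_mem (c, d) (Finset.mem_univ _),
    Matrix.mul_apply, Finset.sum_eq_single_of_mem
      (finRotate (n + 1) a, finRotate (n + 1) b) (Finset.mem_univ _)]
  · simpa only [Matrix.kroneckerMap_apply, Zrho_apply, if_true] using
      RBJ_covariant (q := q) hu hv a b c d
  · rintro ⟨i, j⟩ _ h
    simp only [Matrix.kroneckerMap_apply, Zrho_apply]
    grind
  · rintro ⟨i, j⟩ _ h
    simp only [Matrix.kroneckerMap_apply, Zrho_apply, EmbeddingLike.apply_eq_iff_eq]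
    grind

end
end

section
/- Dressing symmetry of the untwisted reflection equation: let K be an N×N matrix-valued function satisfying the untwisted reflection equation (RE), let Z be an N×N matrix-valued function with Z(u) invertible for all relevant u and satisfying [R(u/v), Z(u)⊗Z(v)] = 0 for all u,v where R(u/v) is defined, and let η ∈ ℂ^×. Then the function u ↦ Z(η/u)^{-1} K(u) Z(ηu) also satisfies the untwisted reflection equation (RE). -/
/-!
The dressed function is `K'(u) = Z(η/u)⁻¹ K(u) Z(ηu)`. Substituting `K'` into (RE) produces four
products of an R-matrix with two dressing factors, and in each of them the quotient of the two
arguments of `Z` is exactly the spectral parameter of the R-matrix: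

* `R21(u/v)` commutes with `Z1(η/u) Z2(η/v)` and `R(u/v)` with `Z1(ηu) Z2(ηv)`;
* `R(uv)` commutes with `Z1(ηu) Z2(η/v)` and `R21(uv)` with `Z1(η/u) Z2(ηv)`.

The last two relations let `Z1(ηu)` and `Z2(η/v)⁻¹` (respectively `Z2(ηv)` and `Z1(η/u)⁻¹`) trade
places across the middle R-matrix. As operators on different tensor legs commute, all dressing
factors then move to the two ends, where (RE) for `K` applies. This computation is carried out in
an arbitrary monoid in `dressing`. The relations for `R21` follow from those for `R` since `P`
intertwines `A ⊗ B` with `B ⊗ A` (`Pmat_mul_kronecker`).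
-/

open Matrix
open scoped Kronecker

noncomputable section

/-- The dressing computation in a monoid: `a, b` are the first-leg factors `Z1(η/u), Z1(ηu)`,
`c, d` the second-leg factors `Z2(η/v), Z2(ηv)`, `k, l` are `K1(u), K2(v)`, and `s, R, S, r` are
`R21(u/v), R(uv), R21(uv), R(u/v)`. -/
theorem dressing {M : Type*} [Monoid M] (a c : Mˣ) (b d k l s R S r : M)
    (hRE : s * k * R * l = l * S * k * r)
    (hR : Commute R (b * c)) (hs : Commute s (a * c))
    (hr : Commute r (b * d)) (hS : Commute S (a * d))
    (hac : Commute (a : M) c) (hbc : Commute b (c : M)) (had : Commute (a : M) d)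
    (hbd : Commute b d)
    (hkc : Commute k (c : M)) (hkd : Commute k d)
    (hla : Commute l (a : M)) (hlb : Commute l b) :
    s * (↑a⁻¹ * k * b) * R * (↑c⁻¹ * l * d) = (↑c⁻¹ * l * d) * S * (↑a⁻¹ * k * b) * r := by
  have e1 : b * R * ↑c⁻¹ = ↑c⁻¹ * R * b := by
    rw [Units.mul_inv_eq_iff_eq_mul, mul_assoc, mul_assoc, Units.eq_inv_mul_iff_mul_eq,
      hR.eq, ← mul_assoc, hbc.eq]
  have e2 : d * S * ↑a⁻¹ = ↑a⁻¹ * S * d := by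
    rw [Units.mul_inv_eq_iff_eq_mul, mul_assoc, mul_assoc, Units.eq_inv_mul_iff_mul_eq,
      ← had.eq, hS.eq, mul_assoc]
  have e3 : s * (↑a⁻¹ * ↑c⁻¹) = (↑a⁻¹ * ↑c⁻¹) * s := by
    have h : Commute s ((a * c : Mˣ) : M) := by simpa using hs
    have h' := h.units_inv_right.eq
    rw [_root_.mul_inv_rev, Units.val_mul] at h'
    rwa [(hac.units_inv_left.units_inv_right).eq]
  have hkc' : k * ↑c⁻¹ = ↑c⁻¹ * k := hkc.units_inv_right.eq
  have hla' : l * ↑a⁻¹ = ↑a⁻¹ * l := hla.units_inv_right.eq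
  have hac' : (↑a⁻¹ : M) * ↑c⁻¹ = ↑c⁻¹ * ↑a⁻¹ := hac.units_inv_left.units_inv_right.eq
  calc s * (↑a⁻¹ * k * b) * R * (↑c⁻¹ * l * d)
      = s * ↑a⁻¹ * k * (b * R * ↑c⁻¹) * l * d := by simp only [mul_assoc]
    _ = s * ↑a⁻¹ * (k * ↑c⁻¹) * R * (b * l) * d := by rw [e1]; simp only [mul_assoc]
    _ = (s * (↑a⁻¹ * ↑c⁻¹)) * k * R * l * (b * d) := by
        rw [hkc', ← hlb.eq]; simp only [mul_assoc]
    _ = ↑a⁻¹ * ↑c⁻¹ * (s * k * R * l) * (b * d) := by rw [e3]; simp only [mul_assoc]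
    _ = ↑a⁻¹ * ↑c⁻¹ * l * S * k * (r * (b * d)) := by rw [hRE]; simp only [mul_assoc]
    _ = ↑c⁻¹ * (↑a⁻¹ * l) * S * (k * d) * b * r := by
        rw [hr.eq, hbd.eq, hac']; simp only [mul_assoc]
    _ = ↑c⁻¹ * l * (↑a⁻¹ * S * d) * k * b * r := by
        rw [← hla', hkd.eq]; simp only [mul_assoc]
    _ = (↑c⁻¹ * l * d) * S * (↑a⁻¹ * k * b) * r := by rw [← e2]; simp only [mul_assoc]

theorem Pmat_apply_s5 (N : ℕ) (i j k l : Fin N) :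
    Pmat N (i, j) (k, l) = if i = l ∧ j = k then 1 else 0 := by
  have h : ∀ x y : ℕ, (Em N x y ⊗ₖ Em N y x) (i, j) (k, l) =
      if y = (j : ℕ) + 1 then
        (if x = (i : ℕ) + 1 then (if i = l ∧ j = k then (1 : ℂ) else 0) else 0) else 0 := by
    intro x y
    simp only [kroneckerMap_apply, Em, of_apply, Fin.ext_iff]
    grind
  have hi : (i : ℕ) + 1 ∈ Finset.Icc 1 N := Finset.mem_Icc.2 ⟨by omega, i.isLt⟩
  have hj : (j : ℕ) + 1 ∈ Finset.Icc 1 N := Finset.mem_Icc.2 ⟨by omega, j.isLt⟩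
  simp_rw [Pmat, Matrix.sum_apply, h, Finset.sum_ite_eq', if_pos hj, Finset.sum_ite_eq', if_pos hi]

theorem Pmat_mul_kronecker (N : ℕ) (A B : Matrix (Fin N) (Fin N) ℂ) :
    Pmat N * (A ⊗ₖ B) = (B ⊗ₖ A) * Pmat N := by
  ext ⟨i, j⟩ ⟨k, l⟩
  simp only [mul_apply, Fintype.sum_prod_type, Pmat_apply_s5, kroneckerMap_apply, ite_and]
  simp [mul_comm]

/-- Conjugation by the flip exchanges the tensor legs, so `R21` commutes with `A ⊗ B` as soon as
`R` commutes with `B ⊗ A`. -/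
theorem R21_commute (N : ℕ) (q w : ℂ) (A B : Matrix (Fin N) (Fin N) ℂ)
    (h : RBJ N q w * (B ⊗ₖ A) = (B ⊗ₖ A) * RBJ N q w) :
    Commute (R21 N q w) (A ⊗ₖ B) := by
  rw [Commute, SemiconjBy, R21, mul_assoc, Pmat_mul_kronecker, mul_assoc, ← mul_assoc (RBJ N q w),
    h, ← mul_assoc, ← mul_assoc, Pmat_mul_kronecker]
  simp only [mul_assoc]

theorem M1_mul (N : ℕ) (A B : Matrix (Fin N) (Fin N) ℂ) : M1 N (A * B) = M1 N A * M1 N B := by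
  simp [M1, ← mul_kronecker_mul]

theorem M2_mul (N : ℕ) (A B : Matrix (Fin N) (Fin N) ℂ) : M2 N (A * B) = M2 N A * M2 N B := by
  simp [M2, ← mul_kronecker_mul]

theorem M1_mul_M2 (N : ℕ) (A B : Matrix (Fin N) (Fin N) ℂ) : M1 N A * M2 N B = A ⊗ₖ B := by
  simp [M1, M2, ← mul_kronecker_mul]

theorem M1_commute_M2 (N : ℕ) (A B : Matrix (Fin N) (Fin N) ℂ) :
    Commute (M1 N A) (M2 N B) := by
  simp [Commute, SemiconjBy, M1, M2, ← mul_kronecker_mul]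

/-- `X ↦ X ⊗ I` as a monoid homomorphism. -/
def M1Hom (N : ℕ) :
    Matrix (Fin N) (Fin N) ℂ →* Matrix (Fin N × Fin N) (Fin N × Fin N) ℂ where
  toFun := M1 N
  map_one' := one_kronecker_one
  map_mul' := M1_mul N

/-- `X ↦ I ⊗ X` as a monoid homomorphism. -/
def M2Hom (N : ℕ) :
    Matrix (Fin N) (Fin N) ℂ →* Matrix (Fin N × Fin N) (Fin N × Fin N) ℂ where
  toFun := M2 N
  map_one' := one_kronecker_one
  map_mul' := M2_mul N

/-- dressing symmetry of the untwisted reflection equation: if `K`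
solves (RE) and `Z` is an (invertible) symmetry of `R`, then
`u ↦ Z(η/u)⁻¹ K(u) Z(ηu)` also solves (RE). -/
theorem statement5 (N : ℕ) (hN : 2 ≤ N) (q : ℂ) (hq : q ≠ 0)
    (K : ℂ → Matrix (Fin N) (Fin N) ℂ) (hK : IsRESol N q K)
    (Z : ℂ → Matrix (Fin N) (Fin N) ℂ)
    (hZinv : ∀ u : ℂ, u ≠ 0 → IsUnit (Z u))
    (hZ : ∀ u v : ℂ, u ≠ 0 → v ≠ 0 → u / v ≠ q ^ 2 → u / v ≠ q⁻¹ ^ 2 →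
      RBJ N q (u / v) * (Z u ⊗ₖ Z v) = (Z u ⊗ₖ Z v) * RBJ N q (u / v))
    (η : ℂ) (hη : η ≠ 0) :
    IsRESol N q (fun u => (Z (η / u))⁻¹ * K u * Z (η * u)) := by
  intro u v hu hv h1 h2 h3 h4
  have hau : η / u ≠ 0 := div_ne_zero hη hu
  have hcv : η / v ≠ 0 := div_ne_zero hη hv
  have hbu : η * u ≠ 0 := mul_ne_zero hη hu
  have hdv : η * v ≠ 0 := mul_ne_zero hη hv
  -- `Z` evaluated at `x`, `y` is compatible with `R` at the spectral parameter `x / y = w`.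
  have key : ∀ x y w : ℂ, x ≠ 0 → y ≠ 0 → x / y = w → w ≠ q ^ 2 → w ≠ q⁻¹ ^ 2 →
      RBJ N q w * (Z x ⊗ₖ Z y) = (Z x ⊗ₖ Z y) * RBJ N q w := by
    rintro x y w hx hy rfl hw hw'
    exact hZ x y hx hy hw hw'
  have kR := key (η * u) (η / v) (u * v) hbu hcv (by field_simp) h3 h4
  have ks := key (η / v) (η / u) (u / v) hcv hau (by field_simp) h1 h2
  have kr := key (η * u) (η * v) (u / v) hbu hdv (by field_simp) h1 h2
  have kS := key (η * v) (η / u) (u * v) hdv hau (by field_simp) h3 h4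
  replace ks := R21_commute _ _ _ _ _ ks
  replace kS := R21_commute _ _ _ _ _ kS
  obtain ⟨a, ha⟩ := hZinv _ hau
  obtain ⟨c, hc⟩ := hZinv _ hcv
  rw [← ha, ← M1_mul_M2] at kS
  rw [← ha, ← hc, ← M1_mul_M2] at ks
  rw [← hc, ← M1_mul_M2] at kR
  rw [← M1_mul_M2] at kr
  have main := dressing (Units.map (M1Hom N) a) (Units.map (M2Hom N) c)
    (M1 N (Z (η * u))) (M2 N (Z (η * v))) (M1 N (K u)) (M2 N (K v)) _ _ _ _
    (hK u v hu hv h1 h2 h3 h4) kR ks kr kS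
    (M1_commute_M2 N _ _) (M1_commute_M2 N _ _) (M1_commute_M2 N _ _) (M1_commute_M2 N _ _)
    (M1_commute_M2 N _ _) (M1_commute_M2 N _ _)
    (M1_commute_M2 N _ _).symm (M1_commute_M2 N _ _).symm
  have ia : (↑(Units.map (M1Hom N) a)⁻¹ : Matrix (Fin N × Fin N) (Fin N × Fin N) ℂ)
      = M1 N (Z (η / u))⁻¹ := by
    rw [← ha, ← coe_units_inv]; rfl
  have ic : (↑(Units.map (M2Hom N) c)⁻¹ : Matrix (Fin N × Fin N) (Fin N × Fin N) ℂ)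
      = M2 N (Z (η / v))⁻¹ := by
    rw [← hc, ← coe_units_inv]; rfl
  rw [ia, ic] at main
  simpa only [REeq, M1_mul, M2_mul] using main

end
end
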